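/- arXiv:2309.05082 — 3 statements merged into one kernel-verified Lean document; each statement's English description precedes it below -/
import Mathlib

section
/- Let E ⊆ ℕ^m and fix a partition of {1,…,m} into p blocks. Then there exists a numerical polynomial ω_E(t₁,…,t_p) such that: (i) ω_E(r₁,…,r_p) = Card V_E(r₁,…,r_p) for all sufficiently large (r₁,…,r_p) ∈ ℕ^p; (ii) the total degree of ω_E does not exceed m and deg_{t_i} ω_E ≤ m_i for 1 ≤ i ≤ p; (iii) deg ω_E = m if and only if E = ∅, in which case ω_E(t₁,…,t_p) = ∏_{i=1}^{p} C(t_i+m_i, m_i). -/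
/-!
By Dickson's lemma `E` may be replaced by the finite set `F` of its minimal elements.
Inclusion–exclusion over `S ⊆ F` then writes `Card V_E(r)` as an alternating sum of numbers of
points of the box `{v | ord_k v ≤ r_k}` lying above `sup S`. Translating by `c = sup S`, and noting
that a box is a product of simplices, such a number is `∏ C(r_k - ord_k c + m_k, m_k)` as soon as
`r_k ≥ ord_k c`: a polynomial of degree `m_k` in `r_k` whose coefficient at `∏ r_k ^ m_k` is
`∏ 1 / m_k!`, whatever `c` is. In the alternating sum these coefficients cancel, because
`∑_{S ⊆ F} (-1)^|S| = 0`, unless `F = ∅`.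
-/

/-- The univariate polynomial `t ↦ C(t + c, j)`. -/
noncomputable def binomShift (c : ℤ) (j : ℕ) : Polynomial ℚ :=
  ((j.factorial : ℚ)⁻¹) • ((descPochhammer ℚ j).comp (Polynomial.X + Polynomial.C (c : ℚ)))

/-- `C(t_k + j, j)` viewed as a multivariate polynomial in the variable `t_k`. -/
noncomputable def binomVar {p : ℕ} (k : Fin p) (j : ℕ) : MvPolynomial (Fin p) ℚ :=
  Polynomial.aeval (MvPolynomial.X k) (binomShift j j)

/-- A numerical polynomial in `p` variables. -/
def IsNumerical {p : ℕ} (f : MvPolynomial (Fin p) ℚ) : Prop :=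
  ∃ s : Fin p → ℕ, ∀ r : Fin p → ℕ, (∀ i, s i ≤ r i) →
    ∃ z : ℤ, MvPolynomial.eval (fun i => (r i : ℚ)) f = (z : ℚ)

/-- Size `m_k` of the `k`-th block of the partition `π` of `{1,…,m}`. -/
def blockCard {m p : ℕ} (π : Fin m → Fin p) (k : Fin p) : ℕ :=
  (Finset.univ.filter fun i => π i = k).card

/-- The order of `a ∈ ℕ^m` with respect to the `k`-th block of the partition `π`. -/
def ordBlockN {m p : ℕ} (π : Fin m → Fin p) (k : Fin p) (a : Fin m → ℕ) : ℕ :=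
  ∑ i ∈ Finset.univ.filter (fun i => π i = k), a i

/-- `V_E = {v ∈ ℕ^m : no e ∈ E satisfies e ≤ v componentwise}`. -/
def VSet {m : ℕ} (E : Set (Fin m → ℕ)) : Set (Fin m → ℕ) :=
  {v | ∀ e ∈ E, ¬ e ≤ v}

/-- `V_E(r₁,…,r_p) = {v ∈ V_E : ord_k v ≤ r_k for all k}`. -/
def VSetBd {m p : ℕ} (π : Fin m → Fin p) (E : Set (Fin m → ℕ)) (r : Fin p → ℕ) :
    Set (Fin m → ℕ) :=
  {v ∈ VSet E | ∀ k, ordBlockN π k v ≤ r k}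

section Counting

open Finset

theorem card_subtype_sum_le {ι : Type*} [Fintype ι] (n : ℕ) :
    Nat.card {f : ι → ℕ // ∑ i, f i ≤ n} = (n + Fintype.card ι).choose (Fintype.card ι) := by
  classical
  -- A slack variable, indexed by `none`, turns the inequality into an equality.
  let e : {f : ι → ℕ // ∑ i, f i ≤ n} ≃ {g : Option ι → ℕ // ∑ o, g o = n} :=
    { toFun f := ⟨fun o ↦ o.elim (n - ∑ i, f.1 i) f.1, by simpa using Nat.sub_add_cancel f.2⟩
      invFun g := ⟨fun i ↦ g.1 (some i),
        (Nat.le_add_left _ _).trans ((Fintype.sum_option g.1).symm.trans g.2).le⟩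
      left_inv _ := rfl
      right_inv g := by
        ext (_ | i)
        · exact Nat.sub_eq_of_eq_add (g.2.symm.trans (Fintype.sum_option g.1))
        · rfl }
  calc Nat.card {f : ι → ℕ // ∑ i, f i ≤ n}
      = Fintype.card (Sym (Option ι) n) := by
        rw [Nat.card_congr (e.trans (Sym.equivNatSumOfFintype _ n).symm), Nat.card_eq_fintype_card]
    _ = (n + Fintype.card ι).choose (Fintype.card ι) := by
        rw [Sym.card_sym_eq_choose, Fintype.card_option, Nat.add_right_comm, Nat.add_sub_cancel,
          add_comm, Nat.choose_symm_add]

theorem ncard_setOf_forall_not_le {α : Type*} [SemilatticeSup α] [OrderBot α] {B : Set α}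
    (hB : B.Finite) (F : Finset α) :
    ({v ∈ B | ∀ e ∈ F, ¬ e ≤ v}.ncard : ℤ) =
      ∑ S ∈ F.powerset, (-1) ^ #S * ((B ∩ Set.Ici (S.sup id)).ncard : ℤ) := by
  classical
  have := hB.fintype
  have ncard_image_val (T : Finset B) : (Subtype.val '' (T : Set B)).ncard = #T := by
    rw [Set.ncard_image_of_injective _ Subtype.val_injective, Set.ncard_coe_finset]
  convert! inclusion_exclusion_card_inf_compl F fun e ↦ ({v : B | e ≤ v} : Finset B) using 1
  · rw [← ncard_image_val]
    congr 2
    ext v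
    simp [Finset.mem_inf, and_comm]
  · refine sum_congr rfl fun S _ ↦ ?_
    rw [← ncard_image_val]
    congr 3
    ext v
    simp [Finset.mem_inf, and_comm]

theorem exists_finset_subset_forall_exists_le {α : Type*} [PartialOrder α] [WellQuasiOrderedLE α]
    (E : Set α) : ∃ F : Finset α, ↑F ⊆ E ∧ ∀ e ∈ E, ∃ f ∈ F, f ≤ e := by
  have hfin : {x | Minimal (· ∈ E) x}.Finite :=
    WellQuasiOrderedLE.finite_of_isAntichain (setOfPred_minimal_antichain _)
  refine ⟨hfin.toFinset, fun x hx ↦ (hfin.mem_toFinset.mp hx).prop, fun e he ↦ ?_⟩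
  obtain ⟨f, hfe, hf⟩ := exists_minimal_le_of_wellFoundedLT (· ∈ E) e he
  exact ⟨f, hfin.mem_toFinset.mpr hf, hfe⟩

end Counting

section MvPolynomialDegree

open MvPolynomial

variable {σ R : Type*} [CommSemiring R]

theorem totalDegree_le_of_degreeOf_le {f : MvPolynomial σ R} {d : σ →₀ ℕ}
    (h : ∀ i, f.degreeOf i ≤ d i) : f.totalDegree ≤ d.degree :=
  Finset.sup_le fun _ hs ↦ Finsupp.degree_mono fun i ↦ degreeOf_le_iff.mp (h i) _ hs

theorem totalDegree_eq_degree_iff_coeff_ne_zero {f : MvPolynomial σ R} {d : σ →₀ ℕ}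
    (h : ∀ i, f.degreeOf i ≤ d i) (hd : d ≠ 0) :
    f.totalDegree = d.degree ↔ coeff d f ≠ 0 := by
  refine ⟨fun hdeg ↦ ?_, fun hcoeff ↦ (totalDegree_le_of_degreeOf_le h).antisymm
    (le_totalDegree (mem_support_iff.mpr hcoeff))⟩
  have hsupp : f.support.Nonempty := by
    rw [Finset.nonempty_iff_ne_empty, Ne, support_eq_empty]
    rintro rfl
    exact hd ((Finsupp.degree_eq_zero_iff d).mp hdeg.symm)
  obtain ⟨s, hs, hsdeg⟩ : ∃ s ∈ f.support, f.totalDegree = s.degree :=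
    Finset.exists_mem_eq_sup _ hsupp _
  obtain ⟨t, rfl⟩ : ∃ t, d = s + t :=
    exists_add_of_le fun i ↦ degreeOf_le_iff.mp (h i) s hs
  have ht : t.degree = 0 := by
    rw [map_add] at hdeg
    omega
  rwa [(Finsupp.degree_eq_zero_iff t).mp ht, add_zero, ← mem_support_iff]

theorem eval_aeval_X (x : σ → R) (k : σ) (q : Polynomial R) :
    eval x (Polynomial.aeval (X k) q) = q.eval (x k) := by
  rw [← coe_aeval_eq_eval, RingHom.coe_coe, ← Polynomial.aeval_algHom_apply, aeval_X,
    Polynomial.coe_aeval_eq_eval]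

variable [Fintype σ]

theorem coeff_prod_aeval_X (q : σ → Polynomial R) (d : σ →₀ ℕ) :
    coeff d (∏ k, Polynomial.aeval (X k : MvPolynomial σ R) (q k)) = ∏ k, (q k).coeff (d k) := by
  classical
  let N (k : σ) : ℕ := max (q k).natDegree (d k) + 1
  have aeval_eq (k : σ) : Polynomial.aeval (X k : MvPolynomial σ R) (q k) =
      ∑ j ∈ Finset.range (N k), monomial (Finsupp.single k j) ((q k).coeff j) := by
    rw [Polynomial.aeval_eq_sum_range' (n := N k) (by grind)]
    simp_rw [X_pow_eq_monomial, smul_monomial, smul_eq_mul, mul_one]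
  have sum_single (f : σ → ℕ) : ∑ k, Finsupp.single k (f k) = Finsupp.equivFunOnFinite.symm f := by
    ext k
    simp [Finsupp.single_apply]
  have hd : (d : σ → ℕ) ∈ Fintype.piFinset fun k ↦ Finset.range (N k) := by
    simp [N]
  simp_rw [aeval_eq, Finset.prod_univ_sum, ← monomial_sum_prod, sum_single, coeff_sum,
    coeff_monomial, Equiv.symm_apply_eq]
  exact Finset.sum_ite_eq_of_mem' _ _ _ hd

theorem degreeOf_prod_aeval_X_le (q : σ → Polynomial R) (i : σ) :
    degreeOf i (∏ k, Polynomial.aeval (X k : MvPolynomial σ R) (q k)) ≤ (q i).natDegree := by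
  refine degreeOf_le_iff.mpr fun d hd ↦ Polynomial.le_natDegree_of_ne_zero fun hcoeff ↦ ?_
  rw [mem_support_iff, coeff_prod_aeval_X] at hd
  exact hd (Finset.prod_eq_zero (Finset.mem_univ i) hcoeff)

end MvPolynomialDegree

section BinomShift

variable (c : ℤ) (j : ℕ)

theorem natDegree_binomShift : (binomShift c j).natDegree = j := by
  rw [binomShift, Polynomial.natDegree_smul _ (by positivity), Polynomial.natDegree_comp,
    Polynomial.natDegree_X_add_C, descPochhammer_natDegree, mul_one]

theorem coeff_binomShift_self : (binomShift c j).coeff j = (j.factorial : ℚ)⁻¹ := by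
  have hmonic : ((descPochhammer ℚ j).comp (Polynomial.X + Polynomial.C (c : ℚ))).Monic :=
    (monic_descPochhammer ℚ j).comp_X_add_C _
  calc (binomShift c j).coeff j = (binomShift c j).leadingCoeff := by
        rw [Polynomial.leadingCoeff, natDegree_binomShift]
    _ = (j.factorial : ℚ)⁻¹ := by
        rw [binomShift, Polynomial.smul_eq_C_mul, Polynomial.leadingCoeff_mul,
          Polynomial.leadingCoeff_C, hmonic.leadingCoeff, mul_one]

variable {c}

theorem eval_binomShift {x : ℚ} {n : ℕ} (h : x + c = n) :
    (binomShift c j).eval x = n.choose j := by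
  rw [binomShift, Polynomial.eval_smul, Polynomial.eval_comp, Polynomial.eval_add,
    Polynomial.eval_X, Polynomial.eval_C, h, Nat.cast_choose_eq_descPochhammer_div, smul_eq_mul,
    div_eq_inv_mul]

end BinomShift

section VSet

variable {m : ℕ} (E : Set (Fin m → ℕ))

theorem vSet_eq_univ_iff : VSet E = Set.univ ↔ E = ∅ := by
  refine ⟨fun h ↦ Set.eq_empty_of_forall_notMem fun e he ↦ ?_, ?_⟩
  · have he' : e ∈ VSet E := h ▸ Set.mem_univ e
    exact he' e he le_rfl
  · rintro rfl
    simp [VSet]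

theorem exists_finset_vSet_eq : ∃ F : Finset (Fin m → ℕ), VSet E = VSet (F : Set (Fin m → ℕ)) := by
  obtain ⟨F, hFE, hF⟩ := exists_finset_subset_forall_exists_le E
  refine ⟨F, Set.Subset.antisymm (fun v hv e he ↦ hv e (hFE he)) fun v hv e he hev ↦ ?_⟩
  obtain ⟨f, hf, hfe⟩ := hF e he
  exact hv f hf (hfe.trans hev)

end VSet

section OrderBox

variable {m p : ℕ} (π : Fin m → Fin p)

theorem sum_blockCard : ∑ k, blockCard π k = m := by
  simpa [blockCard] using (Finset.card_eq_sum_card_fiberwise (f := π) (s := .univ) (t := .univ)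
    (by simp)).symm

theorem ordBlockN_eq_sum_subtype (k : Fin p) (v : Fin m → ℕ) :
    ordBlockN π k v = ∑ i : {i // π i = k}, v i :=
  Finset.sum_subtype _ (by simp) _

theorem ordBlockN_zero (k : Fin p) : ordBlockN π k 0 = 0 := by
  simp [ordBlockN]

theorem ordBlockN_add (k : Fin p) (v w : Fin m → ℕ) :
    ordBlockN π k (v + w) = ordBlockN π k v + ordBlockN π k w :=
  Finset.sum_add_distrib

theorem ordBlockN_mono (k : Fin p) : Monotone (ordBlockN π k) :=
  fun _ _ h ↦ Finset.sum_le_sum fun i _ ↦ h i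

theorem le_ordBlockN (v : Fin m → ℕ) (i : Fin m) : v i ≤ ordBlockN π (π i) v :=
  Finset.single_le_sum (f := v) (fun _ _ ↦ Nat.zero_le _) (by simp)

/-- The set `{v ∈ ℕ^m : ord_k v ≤ r_k for all k}`, that is, `V_∅(r₁,…,r_p)`. -/
def orderBox (r : Fin p → ℕ) : Set (Fin m → ℕ) :=
  {v | ∀ k, ordBlockN π k v ≤ r k}

theorem finite_orderBox (r : Fin p → ℕ) : (orderBox π r).Finite :=
  (Set.finite_Iic (r ∘ π)).subset fun v hv i ↦ (le_ordBlockN π v i).trans (hv (π i))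

/-- Restriction to the blocks identifies a box with a product of simplices. -/
def orderBoxEquiv (r : Fin p → ℕ) :
    orderBox π r ≃ ∀ k, {f : {i // π i = k} → ℕ // ∑ i, f i ≤ r k} where
  toFun v k := ⟨fun i ↦ v.1 i, (ordBlockN_eq_sum_subtype π k v.1).symm.trans_le (v.2 k)⟩
  invFun g := ⟨fun i ↦ (g (π i)).1 ⟨i, rfl⟩, fun k ↦ by
    have sum_eq : ∑ i : {i // π i = k}, (g (π i)).1 ⟨i, rfl⟩ = ∑ i, (g k).1 i :=
      Finset.sum_congr rfl fun ⟨_, h⟩ _ ↦ by subst h; rfl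
    rw [ordBlockN_eq_sum_subtype, sum_eq]
    exact (g k).2⟩
  left_inv _ := rfl
  right_inv g := by
    ext k ⟨i, rfl⟩
    rfl

theorem ncard_orderBox (r : Fin p → ℕ) :
    (orderBox π r).ncard = ∏ k, (r k + blockCard π k).choose (blockCard π k) := by
  simp_rw [← Nat.card_coe_set_eq, Nat.card_congr (orderBoxEquiv π r), Nat.card_pi,
    card_subtype_sum_le, Fintype.card_subtype, blockCard]

theorem orderBox_inter_Ici {r : Fin p → ℕ} {c : Fin m → ℕ} (h : ∀ k, ordBlockN π k c ≤ r k) :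
    orderBox π r ∩ Set.Ici c = (· + c) '' orderBox π fun k ↦ r k - ordBlockN π k c := by
  have add_mem_orderBox_iff (w : Fin m → ℕ) :
      w + c ∈ orderBox π r ↔ w ∈ orderBox π fun k ↦ r k - ordBlockN π k c :=
    forall_congr' fun k ↦ by rw [ordBlockN_add, Nat.le_sub_iff_add_le (h k)]
  ext v
  constructor
  · rintro ⟨hv, hcv⟩
    obtain ⟨w, rfl⟩ : ∃ w, v = w + c := le_iff_exists_add'.mp hcv
    exact ⟨w, (add_mem_orderBox_iff w).mp hv, rfl⟩
  · rintro ⟨w, hw, rfl⟩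
    exact ⟨(add_mem_orderBox_iff w).mpr hw, le_add_self (a := c)⟩

theorem ncard_orderBox_inter_Ici {r : Fin p → ℕ} {c : Fin m → ℕ}
    (h : ∀ k, ordBlockN π k c ≤ r k) :
    (orderBox π r ∩ Set.Ici c).ncard =
      ∏ k, (r k - ordBlockN π k c + blockCard π k).choose (blockCard π k) := by
  rw [orderBox_inter_Ici π h, Set.ncard_image_of_injective _ (add_left_injective c),
    ncard_orderBox]

theorem vSetBd_eq_setOf_mem_orderBox (E : Set (Fin m → ℕ)) (r : Fin p → ℕ) :
    VSetBd π E r = {v ∈ orderBox π r | ∀ e ∈ E, ¬ e ≤ v} :=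
  Set.inter_comm _ _

end OrderBox

section DimensionPolynomial

open Finset MvPolynomial

variable {m p : ℕ} (π : Fin m → Fin p)

/-- The polynomial `∏ₖ C(tₖ + mₖ - ordₖ c, mₖ)`, which counts the points of a large box lying above
`c`. The shift `mₖ - ordₖ c` may be negative, so it is taken in `ℤ`. -/
noncomputable def orthantPolynomial (c : Fin m → ℕ) : MvPolynomial (Fin p) ℚ :=
  ∏ k, Polynomial.aeval (X k) (binomShift (blockCard π k - ordBlockN π k c) (blockCard π k))

/-- The dimension polynomial of a finite subset `F` of `ℕ^m`: the alternating sum over `S ⊆ F` of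
the polynomials of the orthants `⋂ e ∈ S, {v | e ≤ v}`. -/
noncomputable def dimensionPolynomial (F : Finset (Fin m → ℕ)) : MvPolynomial (Fin p) ℚ :=
  ∑ S ∈ F.powerset, C ((-1) ^ #S) * orthantPolynomial π (S.sup id)

/-- The exponent of the monomial `∏ₖ tₖ ^ mₖ`, the only one of total degree `m` that can occur in a
dimension polynomial. -/
noncomputable def topExponent : Fin p →₀ ℕ :=
  Finsupp.equivFunOnFinite.symm (blockCard π)

theorem degree_topExponent : (topExponent π).degree = m :=
  (Finsupp.degree_eq_sum _).trans (sum_blockCard π)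

theorem eval_orthantPolynomial {r : Fin p → ℕ} {c : Fin m → ℕ} (h : ∀ k, ordBlockN π k c ≤ r k) :
    eval (fun k ↦ (r k : ℚ)) (orthantPolynomial π c) = (orderBox π r ∩ Set.Ici c).ncard := by
  rw [ncard_orderBox_inter_Ici π h, orthantPolynomial, map_prod, Nat.cast_prod]
  refine prod_congr rfl fun k _ ↦ ?_
  rw [eval_aeval_X]
  refine eval_binomShift _ ?_
  push_cast [h k]
  ring

theorem degreeOf_orthantPolynomial_le (c : Fin m → ℕ) (k : Fin p) :
    degreeOf k (orthantPolynomial π c) ≤ blockCard π k :=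
  (degreeOf_prod_aeval_X_le _ k).trans (natDegree_binomShift _ _).le

theorem coeff_topExponent_orthantPolynomial (c : Fin m → ℕ) :
    coeff (topExponent π) (orthantPolynomial π c) = ∏ k, ((blockCard π k).factorial : ℚ)⁻¹ :=
  (coeff_prod_aeval_X _ _).trans (prod_congr rfl fun _ _ ↦ coeff_binomShift_self _ _)

theorem orthantPolynomial_zero : orthantPolynomial π 0 = ∏ k, binomVar k (blockCard π k) := by
  simp_rw [orthantPolynomial, binomVar, ordBlockN_zero, Nat.cast_zero, sub_zero]

theorem dimensionPolynomial_empty :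
    dimensionPolynomial π ∅ = ∏ k, binomVar k (blockCard π k) := by
  simp [dimensionPolynomial, ← orthantPolynomial_zero, Pi.bot_def, Pi.zero_def]

theorem eval_dimensionPolynomial {F : Finset (Fin m → ℕ)} {r : Fin p → ℕ}
    (h : ∀ k, ordBlockN π k (F.sup id) ≤ r k) :
    eval (fun k ↦ (r k : ℚ)) (dimensionPolynomial π F) =
      (VSetBd π (F : Set (Fin m → ℕ)) r).ncard := by
  have ord_sup_le {S : Finset (Fin m → ℕ)} (hS : S ∈ F.powerset) (k : Fin p) :
      ordBlockN π k (S.sup id) ≤ r k :=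
    (ordBlockN_mono π k (sup_mono (mem_powerset.mp hS))).trans (h k)
  calc eval (fun k ↦ (r k : ℚ)) (dimensionPolynomial π F)
      = ∑ S ∈ F.powerset, (-1) ^ #S * ((orderBox π r ∩ Set.Ici (S.sup id)).ncard : ℚ) := by
        rw [dimensionPolynomial, map_sum]
        refine sum_congr rfl fun S hS ↦ ?_
        rw [map_mul, eval_C, eval_orthantPolynomial π (ord_sup_le hS)]
    _ = (VSetBd π (F : Set (Fin m → ℕ)) r).ncard := by
        rw [vSetBd_eq_setOf_mem_orderBox]
        exact_mod_cast (ncard_setOf_forall_not_le (finite_orderBox π r) F).symm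

theorem isNumerical_dimensionPolynomial (F : Finset (Fin m → ℕ)) :
    IsNumerical (dimensionPolynomial π F) :=
  ⟨fun k ↦ ordBlockN π k (F.sup id), fun r hr ↦ ⟨(VSetBd π (F : Set (Fin m → ℕ)) r).ncard, by
    exact_mod_cast eval_dimensionPolynomial π hr⟩⟩

theorem degreeOf_dimensionPolynomial_le (F : Finset (Fin m → ℕ)) (k : Fin p) :
    degreeOf k (dimensionPolynomial π F) ≤ blockCard π k :=
  (degreeOf_sum_le k _ _).trans <| Finset.sup_le fun _ _ ↦
    (degreeOf_C_mul_le _ _ _).trans (degreeOf_orthantPolynomial_le π _ k)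

theorem coeff_topExponent_dimensionPolynomial_ne_zero_iff (F : Finset (Fin m → ℕ)) :
    coeff (topExponent π) (dimensionPolynomial π F) ≠ 0 ↔ F = ∅ := by
  classical
  have alternating_sum : ∑ S ∈ F.powerset, (-1 : ℚ) ^ #S = if F = ∅ then 1 else 0 := by
    exact_mod_cast sum_powerset_neg_one_pow_card (x := F)
  have prod_ne_zero : ∏ k, ((blockCard π k).factorial : ℚ)⁻¹ ≠ 0 := by positivity
  simp_rw [dimensionPolynomial, coeff_sum, coeff_C_mul, coeff_topExponent_orthantPolynomial,
    ← sum_mul, alternating_sum]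
  rw [ite_mul, one_mul, zero_mul, ite_ne_right_iff, and_iff_left prod_ne_zero]

theorem totalDegree_dimensionPolynomial_le (F : Finset (Fin m → ℕ)) :
    (dimensionPolynomial π F).totalDegree ≤ m :=
  calc (dimensionPolynomial π F).totalDegree
      ≤ (topExponent π).degree :=
        totalDegree_le_of_degreeOf_le (degreeOf_dimensionPolynomial_le π F)
    _ = m := degree_topExponent π

theorem totalDegree_dimensionPolynomial_eq_iff (hm : 0 < m) (F : Finset (Fin m → ℕ)) :
    (dimensionPolynomial π F).totalDegree = m ↔ F = ∅ := by
  have hd : topExponent π ≠ 0 := by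
    rw [Ne, ← Finsupp.degree_eq_zero_iff, degree_topExponent]
    exact hm.ne'
  calc (dimensionPolynomial π F).totalDegree = m
      ↔ (dimensionPolynomial π F).totalDegree = (topExponent π).degree := by
        rw [degree_topExponent]
    _ ↔ coeff (topExponent π) (dimensionPolynomial π F) ≠ 0 :=
        totalDegree_eq_degree_iff_coeff_ne_zero (degreeOf_dimensionPolynomial_le π F) hd
    _ ↔ F = ∅ := coeff_topExponent_dimensionPolynomial_ne_zero_iff π F

end DimensionPolynomial

/-- **Existence of the dimension polynomial of a subset of `ℕ^m`** (Kolchin-type theorem).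
For `E ⊆ ℕ^m` and a partition of `{1,…,m}` into `p` blocks (encoded by the surjection
`π : Fin m → Fin p`, the block sizes being `blockCard π i`), there is a numerical polynomial
`ω_E` in `p` variables such that (i) `ω_E(r₁,…,r_p) = Card V_E(r₁,…,r_p)` for all sufficiently
large `(r₁,…,r_p)`; (ii) `deg ω_E ≤ m` and `deg_{t_i} ω_E ≤ m_i`; (iii) `deg ω_E = m` iff
`E = ∅`, in which case `ω_E = ∏_i C(t_i + m_i, m_i)`. -/
theorem exists_dimension_polynomial_subset_nat {m p : ℕ} (hm : 0 < m) (hp : 0 < p)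
    (π : Fin m → Fin p) (hπ : Function.Surjective π) (E : Set (Fin m → ℕ)) :
    ∃ ω : MvPolynomial (Fin p) ℚ, IsNumerical ω ∧
      (∃ s : Fin p → ℕ, ∀ r : Fin p → ℕ, (∀ i, s i ≤ r i) →
        MvPolynomial.eval (fun i => (r i : ℚ)) ω = ((VSetBd π E r).ncard : ℚ)) ∧
      ω.totalDegree ≤ m ∧ (∀ i, ω.degreeOf i ≤ blockCard π i) ∧
      (ω.totalDegree = m ↔ E = ∅) ∧
      (E = ∅ → ω = ∏ i, binomVar i (blockCard π i)) := by
  obtain ⟨F, hEF⟩ := exists_finset_vSet_eq E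
  have empty_iff : F = ∅ ↔ E = ∅ := by
    rw [← vSet_eq_univ_iff E, hEF, vSet_eq_univ_iff, Finset.coe_eq_empty]
  refine ⟨dimensionPolynomial π F, isNumerical_dimensionPolynomial π F,
    ⟨fun k ↦ ordBlockN π k (F.sup id), fun r hr ↦ ?_⟩, totalDegree_dimensionPolynomial_le π F,
    degreeOf_dimensionPolynomial_le π F,
    (totalDegree_dimensionPolynomial_eq_iff π hm F).trans empty_iff, fun hE ↦ ?_⟩
  · rw [eval_dimensionPolynomial π hr, VSetBd, VSetBd, hEF]
  · rw [empty_iff.mpr hE, dimensionPolynomial_empty]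
end

section
/- Let E = {e₁,…,e_q} (q ≥ 1) be a finite subset of ℕ^m with e_i = (e_{i1},…,e_{im}), and fix a partition of {1,…,m} into p blocks. For 0 ≤ l ≤ q let Θ(l,q) be the set of all l-element subsets of {1,…,q}; set ē_{∅ j} = 0 and, for ∅ ≠ θ ∈ Θ(l,q), ē_{θ j} = max{e_{ij} : i ∈ θ} (1 ≤ j ≤ m); let b_{θk} = Σ_{h∈Δ_k} ē_{θh} (k = 1,…,p). Then the dimension polynomial of E satisfies ω_E(t₁,…,t_p) = Σ_{l=0}^{q} (−1)^l Σ_{θ∈Θ(l,q)} ∏_{j=1}^{p} C(t_j + m_j − b_{θj}, m_j). -/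
/-- `C(t_k + c, j)` viewed as a multivariate polynomial in the variable `t_k`. -/
noncomputable def binomVarShift {p : ℕ} (k : Fin p) (c : ℤ) (j : ℕ) :
    MvPolynomial (Fin p) ℚ :=
  Polynomial.aeval (MvPolynomial.X k) (binomShift c j)

/-- `ē_{θ h} = max{e_{ih} : i ∈ θ}` (with `ē_{∅ h} = 0`). -/
def thetaMax {m q : ℕ} (e : Fin q → Fin m → ℕ) (θ : Finset (Fin q)) (h : Fin m) : ℕ :=
  θ.sup (fun i => e i h)

/-- `b_{θ k} = Σ_{h ∈ Δ_k} ē_{θ h}`. -/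
def bTheta {m p q : ℕ} (π : Fin m → Fin p) (e : Fin q → Fin m → ℕ)
    (θ : Finset (Fin q)) (k : Fin p) : ℕ :=
  ∑ h ∈ Finset.univ.filter (fun h => π h = k), thetaMax e θ h

/-!
Inside the finite set of all `v` with `ord_k v ≤ r_k` for every `k`, the set `V_E(r)` is the
complement of the union of the up-sets of the `e_i`. The up-sets of the `e_i` with `i ∈ θ`
intersect in the up-set of the join `ē_θ`, so inclusion–exclusion expresses `Card V_E(r)` through
the numbers of `v ≥ ē_θ` with `ord_k v ≤ r_k`. After translation by `ē_θ` and splitting `v` into its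
blocks, each of these is a product of stars-and-bars counts `C(r_k - b_{θk} + m_k, m_k)`, provided
that `b_{θk} ≤ r_k` for all `k`; these conditions for `θ = {1,…,q}` imply those for every `θ`.
-/

open Finset

theorem card_filter_forall_not_le {ι α : Type*} [SemilatticeSup α] [OrderBot α] [DecidableLE α]
    (s : Finset ι) (e : ι → α) (B : Finset α) :
    (#{v ∈ B | ∀ i ∈ s, ¬ e i ≤ v} : ℤ) =
      ∑ θ ∈ s.powerset, (-1 : ℤ) ^ #θ * #{v ∈ B | θ.sup e ≤ v} := by
  classical
  have card_univ_filter (P : α → Prop) [DecidablePred P] :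
      #{v : B | P v} = #{v ∈ B | P v} := by
    rw [univ_eq_attach, filter_attach, card_map, card_attach]
  have inf_compl : (s.inf fun i ↦ ({v : B | e i ≤ v} : Finset B)ᶜ) =
      ({v : B | ∀ i ∈ s, ¬ e i ≤ v} : Finset B) := by
    ext v
    simp [mem_inf]
  have inf_upSets (θ : Finset ι) : (θ.inf fun i ↦ ({v : B | e i ≤ v} : Finset B)) =
      ({v : B | θ.sup e ≤ v} : Finset B) := by
    ext v
    simp [mem_inf]
  rw [← card_univ_filter, ← inf_compl, inclusion_exclusion_card_inf_compl]
  exact sum_congr rfl fun θ _ ↦ by rw [inf_upSets, card_univ_filter (θ.sup e ≤ ·)]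

/-- Adding a slack variable turns the inequality `∑ i, w i ≤ n` into an equality. -/
def sumLEEquivSumEq (ι : Type*) [Fintype ι] (n : ℕ) :
    {w : ι → ℕ // ∑ i, w i ≤ n} ≃ {w : Option ι → ℕ // ∑ i, w i = n} where
  toFun w := ⟨fun o ↦ o.elim (n - ∑ i, w.1 i) w.1, by
    simpa [Fintype.sum_option] using Nat.sub_add_cancel w.2⟩
  invFun w := ⟨fun i ↦ w.1 (some i), by
    have sum_eq : w.1 none + ∑ i, w.1 (some i) = n := (Fintype.sum_option _).symm.trans w.2
    exact le_of_add_le_right sum_eq.le⟩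
  left_inv _ := rfl
  right_inv w := by
    ext (_ | i)
    · simp [← w.2, Fintype.sum_option]
    · rfl

theorem natCard_sum_le (ι : Type*) [Fintype ι] (n : ℕ) :
    Nat.card {w : ι → ℕ // ∑ i, w i ≤ n} = (n + Fintype.card ι).choose (Fintype.card ι) := by
  classical
  calc Nat.card {w : ι → ℕ // ∑ i, w i ≤ n}
      = Nat.card (Sym (Option ι) n) :=
        Nat.card_congr ((sumLEEquivSumEq ι n).trans (Sym.equivNatSumOfFintype (Option ι) n).symm)
    _ = (Fintype.card ι + n).choose n := by
        rw [Nat.card_eq_fintype_card, Sym.card_sym_eq_choose, Fintype.card_option,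
          Nat.add_right_comm, Nat.add_sub_cancel]
    _ = (n + Fintype.card ι).choose (Fintype.card ι) := by
        rw [add_comm, Nat.choose_symm_add]

section BlockBall

variable {ι κ : Type*} [Fintype ι] [DecidableEq ι] [Fintype κ] [DecidableEq κ]

/-- The set of all `v : ι → ℕ` whose order `∑ i with π i = k, v i` with respect to each block
`π ⁻¹' {k}` is at most `r k`. The bound `v ≤ r ∘ π`, which follows from these conditions, makes it
a `Finset`. -/
def blockBall (π : ι → κ) (r : κ → ℕ) : Finset (ι → ℕ) :=
  {v ∈ Iic (r ∘ π) | ∀ k, ∑ i with π i = k, v i ≤ r k}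

theorem mem_blockBall {π : ι → κ} {r : κ → ℕ} {v : ι → ℕ} :
    v ∈ blockBall π r ↔ ∀ k, ∑ i with π i = k, v i ≤ r k := by
  simp only [blockBall, mem_filter, mem_Iic, and_iff_right_iff_imp]
  exact fun hv i ↦ (single_le_sum_of_canonicallyOrdered (by simp)).trans (hv (π i))

/-- Splitting a vector into its blocks. -/
def blockBallEquivPi (π : ι → κ) (r : κ → ℕ) :
    blockBall π r ≃ ∀ k, {w : {i // π i = k} → ℕ // ∑ i, w i ≤ r k} :=
  (((Equiv.sigmaFiberEquiv π).arrowCongr (Equiv.refl ℕ)).symm.trans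
    (Equiv.piCurry fun _ _ ↦ ℕ)).subtypeEquiv (fun v ↦ by
      simp only [mem_blockBall]
      refine forall_congr' fun k ↦ ?_
      rw [sum_subtype (p := fun i ↦ π i = k) _ (by simp)]
      rfl) |>.trans Equiv.subtypePiEquivPi

theorem card_blockBall (π : ι → κ) (r : κ → ℕ) :
    #(blockBall π r) = ∏ k, (r k + #{i | π i = k}).choose #{i | π i = k} := by
  rw [← Nat.card_eq_finsetCard, Nat.card_congr (blockBallEquivPi π r), Nat.card_pi]
  simp only [natCard_sum_le, Fintype.card_subtype]

theorem filter_le_blockBall [DecidableLE (ι → ℕ)] {π : ι → κ} {r : κ → ℕ} {a : ι → ℕ}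
    (ha : a ∈ blockBall π r) :
    {v ∈ blockBall π r | a ≤ v} =
      (blockBall π fun k ↦ r k - ∑ i with π i = k, a i).map (addLeftEmbedding a) := by
  have add_mem_iff (w : ι → ℕ) : a + w ∈ blockBall π r ↔
      w ∈ blockBall π fun k ↦ r k - ∑ i with π i = k, a i := by
    simp only [mem_blockBall, Pi.add_apply, sum_add_distrib]
    exact forall_congr' fun k ↦ (le_tsub_iff_left (mem_blockBall.1 ha k)).symm
  ext v
  simp only [mem_filter, mem_map, addLeftEmbedding_apply, ← add_mem_iff]
  constructor
  · rintro ⟨hv, hav⟩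
    exact ⟨v - a, by rwa [add_tsub_cancel_of_le hav], add_tsub_cancel_of_le hav⟩
  · rintro ⟨w, hw, rfl⟩
    exact ⟨hw, le_self_add⟩

theorem card_filter_le_blockBall [DecidableLE (ι → ℕ)] {π : ι → κ} {r : κ → ℕ} {a : ι → ℕ}
    (ha : a ∈ blockBall π r) :
    #{v ∈ blockBall π r | a ≤ v} =
      ∏ k, (r k - ∑ i with π i = k, a i + #{i | π i = k}).choose #{i | π i = k} := by
  rw [filter_le_blockBall ha, card_map, card_blockBall]

end BlockBall

theorem binomShift_eval {x : ℚ} {c : ℤ} {n : ℕ} (h : x + c = n) (j : ℕ) :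
    (binomShift c j).eval x = n.choose j := by
  rw [binomShift, Polynomial.eval_smul, Polynomial.eval_comp, Polynomial.eval_add,
    Polynomial.eval_X, Polynomial.eval_C, h, descPochhammer_eval_eq_descFactorial,
    Nat.descFactorial_eq_factorial_mul_choose, smul_eq_mul, Nat.cast_mul,
    inv_mul_cancel_left₀ (Nat.cast_ne_zero.2 j.factorial_ne_zero)]

theorem eval_binomVarShift {p : ℕ} (x : Fin p → ℚ) (k : Fin p) (c : ℤ) (j : ℕ) :
    MvPolynomial.eval x (binomVarShift k c j) = (binomShift c j).eval (x k) := by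
  rw [binomVarShift, ← MvPolynomial.coe_aeval_eq_eval, RingHom.coe_coe,
    ← Polynomial.aeval_algHom_apply, MvPolynomial.aeval_X, Polynomial.coe_aeval_eq_eval]

section DimensionPolynomial

variable {m p q : ℕ} (π : Fin m → Fin p) (e : Fin q → Fin m → ℕ)

theorem thetaMax_eq_sup (θ : Finset (Fin q)) : thetaMax e θ = θ.sup e := by
  ext h
  rw [thetaMax, Finset.sup_apply]

theorem bTheta_mono : Monotone (bTheta π e) :=
  fun _ _ hθ _ ↦ sum_le_sum fun _ _ ↦ sup_mono hθ

theorem VSetBd_image_eq_coe_filter [DecidableLE (Fin m → ℕ)] {ι : Type*} (f : ι → Fin m → ℕ)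
    (s : Finset ι) (r : Fin p → ℕ) :
    VSetBd π (f '' s) r = ({v ∈ blockBall π r | ∀ i ∈ s, ¬ f i ≤ v} : Finset (Fin m → ℕ)) := by
  ext v
  simp [VSetBd, VSet, ordBlockN, mem_blockBall, and_comm]

theorem ncard_VSetBd_range [DecidableLE (Fin m → ℕ)] (r : Fin p → ℕ) :
    ((VSetBd π (Set.range e) r).ncard : ℤ) =
      ∑ θ : Finset (Fin q), (-1 : ℤ) ^ #θ * #{v ∈ blockBall π r | thetaMax e θ ≤ v} := by
  rw [← Set.image_univ, ← coe_univ, VSetBd_image_eq_coe_filter, Set.ncard_coe_finset,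
    card_filter_forall_not_le, powerset_univ]
  simp only [thetaMax_eq_sup]

theorem eval_prod_binomVarShift_bTheta [DecidableLE (Fin m → ℕ)]
    {θ : Finset (Fin q)} {r : Fin p → ℕ} (h : ∀ k, bTheta π e θ k ≤ r k) :
    MvPolynomial.eval (fun k ↦ (r k : ℚ))
        (∏ k, binomVarShift k ((blockCard π k : ℤ) - bTheta π e θ k) (blockCard π k)) =
      #{v ∈ blockBall π r | thetaMax e θ ≤ v} := by
  have shift_eq (k : Fin p) : (r k : ℚ) + ((blockCard π k - bTheta π e θ k : ℤ) : ℚ) =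
      (r k - bTheta π e θ k + blockCard π k : ℕ) := by
    push_cast [h k]
    ring
  rw [card_filter_le_blockBall (mem_blockBall.2 h), map_prod, Nat.cast_prod]
  exact prod_congr rfl fun k _ ↦
    (eval_binomVarShift _ k _ _).trans (binomShift_eval (shift_eq k) _)

end DimensionPolynomial

/-- **Explicit formula for the dimension polynomial of a finite subset of `ℕ^m`.**
For `E = {e₁,…,e_q} ⊆ ℕ^m` (`q ≥ 1`) and a partition of `{1,…,m}` into `p` blocks,
the polynomial `Σ_{l=0}^{q} (−1)^l Σ_{θ ∈ Θ(l,q)} ∏_{j=1}^{p} C(t_j + m_j − b_{θj}, m_j)`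
is the dimension polynomial of `E`: it counts `V_E(r₁,…,r_p)` for all sufficiently large
`(r₁,…,r_p) ∈ ℕ^p`. -/
theorem dimension_polynomial_of_finite_subset_nat {m p q : ℕ} (hm : 0 < m) (hp : 0 < p)
    (hq : 1 ≤ q) (π : Fin m → Fin p) (hπ : Function.Surjective π)
    (e : Fin q → Fin m → ℕ) :
    ∃ s : Fin p → ℕ, ∀ r : Fin p → ℕ, (∀ i, s i ≤ r i) →
      MvPolynomial.eval (fun i => (r i : ℚ))
        (∑ l ∈ Finset.range (q + 1), ((-1 : ℚ) ^ l) •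
          ∑ θ ∈ Finset.powersetCard l (Finset.univ : Finset (Fin q)),
            ∏ j, binomVarShift j ((blockCard π j : ℤ) - (bTheta π e θ j : ℤ)) (blockCard π j))
        = ((VSetBd π (Set.range e) r).ncard : ℚ) := by
  classical
  refine ⟨bTheta π e univ, fun r hr ↦ ?_⟩
  have bTheta_le (θ : Finset (Fin q)) (k : Fin p) : bTheta π e θ k ≤ r k :=
    (bTheta_mono π e (subset_univ θ) k).trans (hr k)
  have ncard_eq : ((VSetBd π (Set.range e) r).ncard : ℚ) =
      ∑ θ : Finset (Fin q), (-1) ^ #θ * (#{v ∈ blockBall π r | thetaMax e θ ≤ v} : ℚ) :=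
    mod_cast ncard_VSetBd_range π e r
  rw [ncard_eq, ← powerset_univ, sum_powerset, card_univ, Fintype.card_fin, map_sum]
  refine sum_congr rfl fun l _ ↦ ?_
  rw [MvPolynomial.smul_eval, map_sum, mul_sum]
  refine sum_congr rfl fun θ hθ ↦ ?_
  rw [eval_prod_binomVarShift_bTheta π e (bTheta_le θ), (mem_powersetCard.1 hθ).2]
end

section
/- Let K be an inversive difference field of characteristic zero with basic set σ = {α₁,…,α_m}, partitioned as σ = σ₁ ∪ … ∪ σ_p, and let f, g ∈ K{y₁,…,y_n}*. If rk f < rk g, then f is E-reduced with respect to g. -/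
/-- Terms `γ y_j` of the ring of `σ*`-polynomials: pairs of an exponent vector and an index. -/
abbrev DTerm (m n : ℕ) := (Fin m → ℤ) × Fin n

variable {K : Type*} [Field K] {m n p : ℕ}

/-- `ord_k γ`: sum of absolute values of the exponents of `γ` in the `k`-th block. -/
def ordBlk (π : Fin m → Fin p) (k : Fin p) (γ : Fin m → ℤ) : ℕ :=
  ∑ i ∈ Finset.univ.filter (fun i => π i = k), (γ i).natAbs

/-- `γ ∼ δ`: the exponent vectors lie in a common orthant of `ℤ^m`. -/
def similar {m : ℕ} (γ δ : Fin m → ℤ) : Prop := ∀ i, 0 ≤ γ i * δ i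

/-- The `(2m+p)`-tuple used to define the order `<_k` on `Γ`. -/
def keyTuple (π : Fin m → Fin p) (k : Fin p) (γ : Fin m → ℤ) : List ℤ :=
  [(ordBlk π k γ : ℤ)] ++
  (((List.finRange p).filter (fun j => j ≠ k)).map fun j => (ordBlk π j γ : ℤ)) ++
  (((List.finRange m).filter (fun i => π i = k)).map fun i => |γ i|) ++
  (((List.finRange m).filter (fun i => π i = k)).map fun i => γ i) ++
  (((List.finRange m).filter (fun i => π i ≠ k)).map fun i => |γ i|) ++
  (((List.finRange m).filter (fun i => π i ≠ k)).map fun i => γ i)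

/-- Key of a term for the order `<_k` on terms (lexicographic: first the key of `γ`,
then the index of the indeterminate). -/
def termKey (π : Fin m → Fin p) (k : Fin p) (u : DTerm m n) : Lex (List ℤ × ℕ) :=
  toLex (keyTuple π k u.1, (u.2 : ℕ))

/-- `f` lies in the base field `K` (is a constant `σ*`-polynomial). -/
def IsConst (f : MvPolynomial (DTerm m n) K) : Prop := f.vars = ∅

/-- The `k`-leader `u_f^{(k)}` of `f`: the `<_k`-greatest term appearing in `f`. -/
noncomputable def leader [NeZero n] (π : Fin m → Fin p) (k : Fin p)
    (f : MvPolynomial (DTerm m n) K) : DTerm m n :=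
  if h : f.vars.Nonempty then (Finset.exists_max_image f.vars (termKey π k) h).choose
  else (0, default)

/-- The `k`-coleader `v_f^{(k)}` of `f`: the `<_k`-least term appearing in `f`. -/
noncomputable def coleader [NeZero n] (π : Fin m → Fin p) (k : Fin p)
    (f : MvPolynomial (DTerm m n) K) : DTerm m n :=
  if h : f.vars.Nonempty then (Finset.exists_min_image f.vars (termKey π k) h).choose
  else (0, default)

/-- The action of `γ ∈ Γ` on a term. -/
def shiftTerm (γ : Fin m → ℤ) (u : DTerm m n) : DTerm m n := (γ + u.1, u.2)

/-- The automorphism `γ = α₁^{k₁} ⋯ α_m^{k_m}` of `K`. -/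
noncomputable def gammaPowK (αK : Fin m → RingAut K)
    (hcK : ∀ i j, Commute (αK i) (αK j)) (γ : Fin m → ℤ) : RingAut K :=
  Finset.univ.noncommProd (fun i => αK i ^ γ i)
    (fun i _ j _ _ => Commute.zpow_zpow (hcK i j) (γ i) (γ j))

/-- The action of `γ ∈ Γ` on the ring of `σ*`-polynomials: it acts on coefficients through
the automorphism `γ` of `K` and sends a term `γ' y_j` to `(γγ') y_j`. -/
noncomputable def gammaAct (αK : Fin m → RingAut K)
    (hcK : ∀ i j, Commute (αK i) (αK j)) (γ : Fin m → ℤ) :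
    MvPolynomial (DTerm m n) K →+* MvPolynomial (DTerm m n) K :=
  (MvPolynomial.rename (shiftTerm γ)).toRingHom.comp
    (MvPolynomial.map (gammaPowK αK hcK γ : K →+* K))

/-- `f` is `E`-reduced with respect to `g`: whenever `f` contains a power `(γ u_g^{(1)})^e`
with `γ ∼ u_g^{(1)}` and `e ≥ deg_{u_g^{(1)}} g`, either `ord_k u_{γg}^{(k)} > ord_k u_f^{(k)}`
for some `k ∈ {2,…,p}` or `ord_j v_{γg}^{(j)} < ord_j v_f^{(j)}` for some `j ∈ {1,…,p}`. -/
def EReduced [NeZero n] [NeZero p] (π : Fin m → Fin p) (αK : Fin m → RingAut K)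
    (hcK : ∀ i j, Commute (αK i) (αK j)) (f g : MvPolynomial (DTerm m n) K) : Prop :=
  ∀ γ : Fin m → ℤ, similar γ (leader π 0 g).1 →
    g.degreeOf (leader π 0 g) ≤ f.degreeOf (shiftTerm γ (leader π 0 g)) →
    ((∃ k : Fin p, k ≠ 0 ∧
        ordBlk π k (leader π k f).1 < ordBlk π k (leader π k (gammaAct αK hcK γ g)).1) ∨
     (∃ j : Fin p,
        ordBlk π j (coleader π j (gammaAct αK hcK γ g)).1 < ordBlk π j (coleader π j f).1))

/-- The components of the rank tuple of `f` after the `1`-leader: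
`(deg_{u_f^{(1)}} f, ord₂ u_f^{(2)}, …, ord_p u_f^{(p)}, Eord₁ f, …, Eord_p f)`. -/
noncomputable def rankRest [NeZero n] [NeZero p] (π : Fin m → Fin p) (f : MvPolynomial (DTerm m n) K) :
    List ℕ :=
  [f.degreeOf (leader π 0 f)] ++
  (((List.finRange p).filter (fun j => j ≠ 0)).map fun j => ordBlk π j (leader π j f).1) ++
  ((List.finRange p).map fun j =>
    ordBlk π j (leader π j f).1 - ordBlk π j (coleader π j f).1)

/-- `rk f < rk g`. -/
def rkLt [NeZero n] [NeZero p] (π : Fin m → Fin p)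
    (f g : MvPolynomial (DTerm m n) K) : Prop :=
  (IsConst f ∧ ¬ IsConst g) ∨
  (¬ IsConst f ∧ ¬ IsConst g ∧
    (termKey π 0 (leader π 0 f) < termKey π 0 (leader π 0 g) ∨
     (leader π 0 f = leader π 0 g ∧ rankRest π f < rankRest π g)))

/-- `rk f = rk g`. -/
def rkEq [NeZero n] [NeZero p] (π : Fin m → Fin p)
    (f g : MvPolynomial (DTerm m n) K) : Prop :=
  (IsConst f ∧ IsConst g) ∨
  (¬ IsConst f ∧ ¬ IsConst g ∧ leader π 0 f = leader π 0 g ∧ rankRest π f = rankRest π g)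

/-- `rk f ≤ rk g`. -/
def rkLe [NeZero n] [NeZero p] (π : Fin m → Fin p)
    (f g : MvPolynomial (DTerm m n) K) : Prop :=
  rkLt π f g ∨ rkEq π f g

/-- A set of `σ*`-polynomials is `E`-autoreduced if it is empty, or it contains no element
of `K` and each of its elements is `E`-reduced with respect to all the others. -/
def EAutoreduced [NeZero n] [NeZero p] (π : Fin m → Fin p) (αK : Fin m → RingAut K)
    (hcK : ∀ i j, Commute (αK i) (αK j)) (A : Set (MvPolynomial (DTerm m n) K)) : Prop :=
  A = ∅ ∨ ((∀ f ∈ A, ¬ IsConst f) ∧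
    ∀ f ∈ A, ∀ g ∈ A, f ≠ g → EReduced π αK hcK f g)

/-- `rk A < rk B` for `E`-autoreduced sets: listing the elements of `A` and `B` in order of
increasing rank, either some initial segments have elementwise equal ranks and at the next
position the element of `A` has lower rank, or `A` properly prolongs `B` rank-wise. -/
def rkSetLt [NeZero n] [NeZero p] (π : Fin m → Fin p)
    (A B : Set (MvPolynomial (DTerm m n) K)) : Prop :=
  ∃ as bs : List (MvPolynomial (DTerm m n) K),
    as.Nodup ∧ bs.Nodup ∧ {x | x ∈ as} = A ∧ {x | x ∈ bs} = B ∧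
    as.Pairwise (rkLe π) ∧ bs.Pairwise (rkLe π) ∧
    ((∃ (k : ℕ) (x y : MvPolynomial (DTerm m n) K),
        List.Forall₂ (rkEq π) (as.take k) (bs.take k) ∧
        as[k]? = some x ∧ bs[k]? = some y ∧ rkLt π x y) ∨
     (bs.length < as.length ∧ List.Forall₂ (rkEq π) (as.take bs.length) bs))

/-- An ideal of the ring of `σ*`-polynomials stable under the action of `Γ`
(equivalently, under `σ ∪ σ⁻¹`): a `σ*`-ideal. -/
def IsSigmaStable (αK : Fin m → RingAut K) (hcK : ∀ i j, Commute (αK i) (αK j))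
    (I : Ideal (MvPolynomial (DTerm m n) K)) : Prop :=
  ∀ (γ : Fin m → ℤ) f, f ∈ I → gammaAct αK hcK γ f ∈ I

/-- `[A]*`: the smallest `σ*`-ideal containing `A`. -/
noncomputable def sigmaIdealGen (αK : Fin m → RingAut K)
    (hcK : ∀ i j, Commute (αK i) (αK j)) (A : Set (MvPolynomial (DTerm m n) K)) :
    Ideal (MvPolynomial (DTerm m n) K) :=
  sInf {I | A ⊆ I ∧ IsSigmaStable αK hcK I}

/-- An `E`-characteristic set of a `σ*`-ideal `J`: an `E`-autoreduced subset of `J` of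
lowest rank among all `E`-autoreduced subsets of `J`. -/
def ECharSet [NeZero n] [NeZero p] (π : Fin m → Fin p) (αK : Fin m → RingAut K)
    (hcK : ∀ i j, Commute (αK i) (αK j)) (J : Ideal (MvPolynomial (DTerm m n) K))
    (A : Set (MvPolynomial (DTerm m n) K)) : Prop :=
  A ⊆ ↑J ∧ EAutoreduced π αK hcK A ∧
  ∀ B : Set (MvPolynomial (DTerm m n) K), B ⊆ ↑J → EAutoreduced π αK hcK B →
    ¬ rkSetLt π B A

/-!
The first `p` entries of the key defining `<_k` are the block orders, and these are additive on
similar exponent vectors; so for `γ ∼ u` and `γ ≠ 1` the term `γ u` is strictly `<_k`-greater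
than `u`. If `f` contains `γ u_g^{(1)}` with `γ ∼ u_g^{(1)}`, then
`γ u_g^{(1)} ≤ u_f^{(1)} ≤ u_g^{(1)}` because `rk f < rk g`, which forces `γ = 1` and
`u_f^{(1)} = u_g^{(1)}`. Were `f` not `E`-reduced with respect to `g`, each remaining entry of
`rk g` would be at most the corresponding entry of `rk f`, contradicting `rk f < rk g`.
-/

theorem append_lt_append_of_forall₂_le_of_ne {α : Type*} [LinearOrder α] {l₁ l₂ : List α}
    (hle : List.Forall₂ (· ≤ ·) l₁ l₂) (hne : l₁ ≠ l₂) (t₁ t₂ : List α) :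
    l₁ ++ t₁ < l₂ ++ t₂ := by
  induction hle with
  | nil => exact absurd rfl hne
  | cons hab _ ih =>
    rw [List.cons_append, List.cons_append, List.cons_lt_cons_iff]
    rcases hab.lt_or_eq with hlt | rfl
    · exact Or.inl hlt
    · exact Or.inr ⟨rfl, ih fun h => hne (h ▸ rfl)⟩

theorem le_of_forall₂_le {α : Type*} [LinearOrder α] {l₁ l₂ : List α}
    (hle : List.Forall₂ (· ≤ ·) l₁ l₂) : l₁ ≤ l₂ := by
  by_cases heq : l₁ = l₂
  · exact heq.le
  · simpa using (append_lt_append_of_forall₂_le_of_ne hle heq [] []).le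

theorem forall₂_map_map_of_forall {ι α β : Type*} {R : α → β → Prop} {f : ι → α} {g : ι → β}
    (h : ∀ i, R (f i) (g i)) (l : List ι) : List.Forall₂ R (l.map f) (l.map g) := by
  simpa [List.forall₂_same] using fun i _ => h i

theorem natAbs_add_of_mul_nonneg {a b : ℤ} (h : 0 ≤ a * b) :
    (a + b).natAbs = a.natAbs + b.natAbs := by
  rcases mul_nonneg_iff.mp h with ⟨ha, hb⟩ | ⟨ha, hb⟩
  · exact Int.natAbs_add_of_nonneg ha hb
  · exact Int.natAbs_add_of_nonpos ha hb

section Order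

variable (π : Fin m → Fin p) {γ δ : Fin m → ℤ}

theorem ordBlk_add_of_similar (k : Fin p) (h : similar γ δ) :
    ordBlk π k (γ + δ) = ordBlk π k γ + ordBlk π k δ := by
  simp only [ordBlk, ← Finset.sum_add_distrib, Pi.add_apply, natAbs_add_of_mul_nonneg (h _)]

theorem forall_ordBlk_eq_zero_iff : (∀ k, ordBlk π k γ = 0) ↔ γ = 0 := by
  simp only [ordBlk, Finset.sum_eq_zero_iff, Finset.mem_filter_univ, Int.natAbs_eq_zero, funext_iff,
    Pi.zero_apply]
  exact ⟨fun h i => h (π i) i rfl, fun h _ i _ => h i⟩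

theorem keyTuple_lt_keyTuple (k : Fin p)
    (h : (fun j => ordBlk π j γ) < fun j => ordBlk π j δ) :
    keyTuple π k γ < keyTuple π k δ := by
  obtain ⟨hle, j, hj⟩ := Pi.lt_def.mp h
  let blocks := k :: (List.finRange p).filter (fun i => i ≠ k)
  have hmem : j ∈ blocks := by simp [blocks, em]
  have hords : List.Forall₂ (· ≤ ·) (blocks.map fun i => (ordBlk π i γ : ℤ))
      (blocks.map fun i => (ordBlk π i δ : ℤ)) :=
    forall₂_map_map_of_forall (fun i => Int.ofNat_le.mpr (hle i)) blocks
  have hne : (blocks.map fun i => (ordBlk π i γ : ℤ)) ≠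
      blocks.map fun i => (ordBlk π i δ : ℤ) :=
    fun heq => hj.ne (Int.ofNat_inj.mp (List.map_inj_left.mp heq j hmem))
  simpa [keyTuple, blocks] using append_lt_append_of_forall₂_le_of_ne hords hne _ _

theorem termKey_lt_termKey_shiftTerm (k : Fin p) {u : DTerm m n} (h : similar γ u.1)
    (hγ : γ ≠ 0) : termKey π k u < termKey π k (shiftTerm γ u) := by
  obtain ⟨j, hj⟩ := not_forall.mp (mt (forall_ordBlk_eq_zero_iff π).mp hγ)
  refine Prod.Lex.toLex_lt_toLex.mpr (Or.inl (keyTuple_lt_keyTuple π k (Pi.lt_def.mpr ⟨?_, j, ?_⟩)))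
  · intro i
    simp [shiftTerm, ordBlk_add_of_similar π i h]
  · simpa [shiftTerm, ordBlk_add_of_similar π j h] using Nat.pos_of_ne_zero hj

end Order

section Action

theorem shiftTerm_zero : (shiftTerm 0 : DTerm m n → DTerm m n) = id := by
  funext u
  simp [shiftTerm]

variable (αK : Fin m → RingAut K) (hcK : ∀ i j, Commute (αK i) (αK j))

theorem gammaPowK_zero : gammaPowK αK hcK 0 = 1 :=
  (Finset.noncommProd_eq_pow_card _ _ _ 1 fun i _ => zpow_zero (αK i)).trans (one_pow _)

theorem gammaAct_zero : gammaAct (n := n) αK hcK 0 = RingHom.id _ := by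
  ext <;> simp [gammaAct, gammaPowK_zero, shiftTerm_zero]

end Action

section Leader

variable [NeZero n] (π : Fin m → Fin p) (k : Fin p) {f : MvPolynomial (DTerm m n) K}

theorem leader_mem_vars (hf : ¬ IsConst f) : leader π k f ∈ f.vars := by
  have hne : f.vars.Nonempty := Finset.nonempty_iff_ne_empty.mpr hf
  rw [leader, dif_pos hne]
  exact (Finset.exists_max_image f.vars (termKey π k) hne).choose_spec.1

theorem termKey_le_termKey_leader {u : DTerm m n} (hu : u ∈ f.vars) :
    termKey π k u ≤ termKey π k (leader π k f) := by
  rw [leader, dif_pos ⟨u, hu⟩]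
  exact (Finset.exists_max_image f.vars (termKey π k) ⟨u, hu⟩).choose_spec.2 u hu

end Leader

section Rank

variable [NeZero n] [NeZero p] {π : Fin m → Fin p} {f g : MvPolynomial (DTerm m n) K}

theorem rankRest_le_rankRest
    (hdeg : f.degreeOf (leader π 0 f) ≤ g.degreeOf (leader π 0 g))
    (hleader : ∀ k, ordBlk π k (leader π k f).1 ≤ ordBlk π k (leader π k g).1)
    (hcoleader : ∀ k, ordBlk π k (coleader π k g).1 ≤ ordBlk π k (coleader π k f).1) :
    rankRest π f ≤ rankRest π g :=
  le_of_forall₂_le <| List.rel_append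
    (List.rel_append (.cons hdeg .nil) (forall₂_map_map_of_forall hleader _))
    (forall₂_map_map_of_forall (fun k => tsub_le_tsub (hleader k) (hcoleader k)) _)

theorem not_isConst_of_rkLt (h : rkLt π f g) : ¬ IsConst g :=
  h.elim And.right fun h => h.2.1

theorem termKey_leader_lt_or_of_rkLt (h : rkLt π f g) (hf : ¬ IsConst f) :
    termKey π 0 (leader π 0 f) < termKey π 0 (leader π 0 g) ∨
      (leader π 0 f = leader π 0 g ∧ rankRest π f < rankRest π g) :=
  (h.resolve_left fun h' => hf h'.1).2.2

theorem leader_eq_and_rankRest_lt_of_rkLt (h : rkLt π f g) (hmem : leader π 0 g ∈ f.vars) :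
    leader π 0 f = leader π 0 g ∧ rankRest π f < rankRest π g :=
  (termKey_leader_lt_or_of_rkLt h (Finset.ne_empty_of_mem hmem)).resolve_left
    (termKey_le_termKey_leader π 0 hmem).not_gt

theorem eq_zero_of_rkLt_of_shiftTerm_leader_mem_vars {γ : Fin m → ℤ} (h : rkLt π f g)
    (hγ : similar γ (leader π 0 g).1) (hmem : shiftTerm γ (leader π 0 g) ∈ f.vars) :
    γ = 0 := by
  by_contra hne
  have hlt : termKey π 0 (leader π 0 g) < termKey π 0 (leader π 0 f) :=
    (termKey_lt_termKey_shiftTerm π 0 hγ hne).trans_le (termKey_le_termKey_leader π 0 hmem)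
  rcases termKey_leader_lt_or_of_rkLt h (Finset.ne_empty_of_mem hmem) with hgt | ⟨heq, -⟩
  · exact hlt.asymm hgt
  · exact hlt.ne (heq ▸ rfl)

end Rank

theorem eReduced_of_rkLt_general [NeZero n] [NeZero p] (π : Fin m → Fin p)
    (αK : Fin m → RingAut K) (hcK : ∀ i j, Commute (αK i) (αK j))
    (f g : MvPolynomial (DTerm m n) K) (h : rkLt π f g) : EReduced π αK hcK f g := by
  intro γ hγ hdeg
  have hpos : 0 < g.degreeOf (leader π 0 g) :=
    Nat.pos_of_ne_zero <| MvPolynomial.mem_vars_iff_degreeOf_ne_zero.mp <|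
      leader_mem_vars π 0 (not_isConst_of_rkLt h)
  have hmem : shiftTerm γ (leader π 0 g) ∈ f.vars :=
    MvPolynomial.mem_vars_iff_degreeOf_ne_zero.mpr (hpos.trans_le hdeg).ne'
  obtain rfl := eq_zero_of_rkLt_of_shiftTerm_leader_mem_vars h hγ hmem
  rw [shiftTerm_zero, id] at hdeg hmem
  obtain ⟨hlead, hrest⟩ := leader_eq_and_rankRest_lt_of_rkLt h hmem
  rw [gammaAct_zero, RingHom.id_apply]
  by_contra! ⟨hleader, hcoleader⟩
  refine hrest.not_ge (rankRest_le_rankRest (hlead ▸ hdeg) (fun k => ?_) hcoleader)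
  obtain rfl | hk := eq_or_ne k 0
  · rw [hlead]
  · exact hleader k hk

/-- **Lower rank implies `E`-reducedness.**
If `f, g ∈ K{y₁,…,y_n}*` and `rk f < rk g`, then `f` is `E`-reduced with respect to `g`. -/
theorem eReduced_of_rkLt {K : Type*} [Field K] [CharZero K] {m n p : ℕ}
    [NeZero n] [NeZero p] (π : Fin m → Fin p) (hπ : Function.Surjective π)
    (αK : Fin m → RingAut K) (hcK : ∀ i j, Commute (αK i) (αK j))
    (f g : MvPolynomial (DTerm m n) K) (h : rkLt π f g) :
    EReduced π αK hcK f g :=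
  eReduced_of_rkLt_general π αK hcK f g h
end
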